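/- Define Ĵ : ℝ^k × ℝ → ℝ by Ĵ(p, w) := (2^{2d}/(α²·w^{2d+2})) · Σ_{i=1}^d ‖pⁱ‖² · (∏_{j≠i} sin²(α_j·w/2)) · sin(α_i·w/2) · (sin(α_i·w/2) − (α_i·w/2)·cos(α_i·w/2)) for w ≠ 0 (with α := ∏ α_i), and Ĵ(p, 0) := (1/12)·Σ_{i=1}^d α_i²·‖pⁱ‖². Then for every Lebesgue-measurable set A ⊆ D and every t ∈ [0,1]: ∫_{t·A} Ĵ dλ ≥ t^{k+3} · ∫_A Ĵ dλ, where t·A := {(t·p, t·w) : (p,w) ∈ A} and λ is the Lebesgue measure on ℝ^k × ℝ ≅ ℝ^{k+1}. (This is the inequality μ(Ω_t) ≥ t^{k+3}·μ(Ω) proving that a corank-1 Carnot group of rank k satisfies MCP(0, k+3).) -/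

import Mathlib

open Finset MeasureTheory Pointwise

/-- The phase space `ℝ^k × ℝ` of a corank-1 Carnot group, written in blocks
`(p⁰, p¹, …, p^d, w)` with `p⁰ ∈ ℝ^{k-2d}`, `pⁱ ∈ ℝ²` and `w ∈ ℝ`. -/
abbrev E (d k : ℕ) : Type := (Fin (k - 2 * d) → ℝ) × (Fin d → ℝ × ℝ) × ℝ

/-- The Jacobian determinant `Ĵ` of the exponential map of a corank-1 Carnot
group whose skew-symmetric matrix has nonzero singular values `α 0 ≤ … ≤ α (d-1)`. -/
noncomputable def Jhat (d k : ℕ) (α : Fin d → ℝ) (q : E d k) : ℝ :=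
  if q.2.2 = 0 then
    (1 / 12) * ∑ i, α i ^ 2 * ((q.2.1 i).1 ^ 2 + (q.2.1 i).2 ^ 2)
  else
    2 ^ (2 * d) / ((∏ i, α i) ^ 2 * q.2.2 ^ (2 * d + 2)) *
      ∑ i, ((q.2.1 i).1 ^ 2 + (q.2.1 i).2 ^ 2) *
        (∏ j ∈ univ.erase i, Real.sin (α j * q.2.2 / 2) ^ 2) *
        Real.sin (α i * q.2.2 / 2) *
        (Real.sin (α i * q.2.2 / 2) - α i * q.2.2 / 2 * Real.cos (α i * q.2.2 / 2))

lemma aux_sin {t x : ℝ} (ht0 : 0 ≤ t) (ht1 : t ≤ 1) (hx0 : 0 ≤ x) (hx : x ≤ Real.pi) :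
    t * Real.sin x ≤ Real.sin (t * x) := by
  have h := strictConcaveOn_sin_Icc.concaveOn.2
    (show (0:ℝ) ∈ Set.Icc 0 Real.pi from ⟨le_refl _, Real.pi_pos.le⟩) ⟨hx0, hx⟩
    (show 0 ≤ 1 - t by linarith) ht0 (by ring)
  simpa using h

lemma aux_G {t x : ℝ} (ht0 : 0 ≤ t) (ht1 : t ≤ 1) (hx0 : 0 ≤ x) (hx : x ≤ Real.pi) :
    t ^ 3 * (Real.sin x - x * Real.cos x) ≤
      Real.sin (t * x) - t * x * Real.cos (t * x) := by
  have hder : ∀ y : ℝ, HasDerivAt (fun y => Real.sin (t * y) - t * y * Real.cos (t * y)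
      - t ^ 3 * (Real.sin y - y * Real.cos y))
      (t ^ 2 * y * (Real.sin (t * y) - t * Real.sin y)) y := by
    intro y
    have h1 : HasDerivAt (fun y : ℝ => t * y) t y := by
      simpa using (hasDerivAt_id y).const_mul t
    have h2 := (h1.sin.sub (h1.mul h1.cos)).sub
      (((Real.hasDerivAt_sin y).sub ((hasDerivAt_id y).mul (Real.hasDerivAt_cos y))).const_mul (t ^ 3))
    refine HasDerivAt.congr_deriv h2 ?_
    simp only [id, one_mul, Pi.mul_apply]
    ring
  have hm : MonotoneOn (fun y => Real.sin (t * y) - t * y * Real.cos (t * y)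
      - t ^ 3 * (Real.sin y - y * Real.cos y)) (Set.Icc 0 Real.pi) := by
    apply monotoneOn_of_deriv_nonneg (convex_Icc _ _)
    · exact fun y _ => (hder y).continuousAt.continuousWithinAt
    · exact fun y _ => (hder y).differentiableAt.differentiableWithinAt
    · intro y hy
      rw [interior_Icc] at hy
      rw [(hder y).deriv]
      have := aux_sin ht0 ht1 hy.1.le hy.2.le
      have := hy.1.le
      apply mul_nonneg (by positivity)
      linarith
  have h := hm ⟨le_refl _, Real.pi_pos.le⟩ ⟨hx0, hx⟩ hx0
  simp at h
  linarith

lemma aux_pos {x : ℝ} (hx0 : 0 ≤ x) (hx : x ≤ Real.pi) :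
    0 ≤ Real.sin x - x * Real.cos x := by
  have h := aux_G (t := 0) le_rfl zero_le_one hx0 hx
  have hder : ∀ y : ℝ, HasDerivAt (fun y => Real.sin y - y * Real.cos y)
      (y * Real.sin y) y := by
    intro y
    have h2 := ((Real.hasDerivAt_sin y).sub ((hasDerivAt_id y).mul (Real.hasDerivAt_cos y)))
    refine HasDerivAt.congr_deriv h2 ?_
    simp only [id, one_mul, Pi.mul_apply]
    ring
  have hm : MonotoneOn (fun y => Real.sin y - y * Real.cos y) (Set.Icc 0 Real.pi) := by
    apply monotoneOn_of_deriv_nonneg (convex_Icc _ _)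
    · exact fun y _ => (hder y).continuousAt.continuousWithinAt
    · exact fun y _ => (hder y).differentiableAt.differentiableWithinAt
    · intro y hy
      rw [interior_Icc] at hy
      rw [(hder y).deriv]
      exact mul_nonneg hy.1.le (Real.sin_nonneg_of_nonneg_of_le_pi hy.1.le hy.2.le)
  have h := hm ⟨le_refl _, Real.pi_pos.le⟩ ⟨hx0, hx⟩ hx0
  simp at h
  linarith

lemma aux_S {t x : ℝ} (ht0 : 0 ≤ t) (ht1 : t ≤ 1) (hx : |x| ≤ Real.pi) :
    t ^ 2 * Real.sin x ^ 2 ≤ Real.sin (t * x) ^ 2 := by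
  wlog h0 : 0 ≤ x generalizing x
  · have := this (x := -x) (by simpa using hx) (by linarith)
    simpa using this
  rw [abs_of_nonneg h0] at hx
  have h1 := aux_sin ht0 ht1 h0 hx
  have h2 := Real.sin_nonneg_of_nonneg_of_le_pi h0 hx
  rw [← mul_pow]
  gcongr

lemma aux_H {t x : ℝ} (ht0 : 0 ≤ t) (ht1 : t ≤ 1) (hx : |x| ≤ Real.pi) :
    0 ≤ Real.sin x * (Real.sin x - x * Real.cos x) ∧
    t ^ 4 * (Real.sin x * (Real.sin x - x * Real.cos x)) ≤
      Real.sin (t * x) * (Real.sin (t * x) - t * x * Real.cos (t * x)) := by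
  wlog h0 : 0 ≤ x generalizing x
  · have := this (x := -x) (by simpa using hx) (by linarith)
    simp only [mul_neg, Real.sin_neg, Real.cos_neg] at this
    refine ⟨by linarith [this.1], by linarith [this.2]⟩
  rw [abs_of_nonneg h0] at hx
  have h1 := aux_sin ht0 ht1 h0 hx
  have h2 := Real.sin_nonneg_of_nonneg_of_le_pi h0 hx
  have h3 := aux_G ht0 ht1 h0 hx
  have h4 := aux_pos h0 hx
  refine ⟨mul_nonneg h2 h4, ?_⟩
  calc _ = (t * Real.sin x) * (t ^ 3 * (Real.sin x - x * Real.cos x)) := by ring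
    _ ≤ _ := by
      apply mul_le_mul h1 h3 (by positivity)
      exact le_trans (by positivity) h1

lemma aux_J (d k : ℕ) (α : Fin d → ℝ) (q : E d k) {t : ℝ} (ht0 : 0 < t) (ht1 : t ≤ 1)
    (hq : ∀ i, |α i * q.2.2 / 2| ≤ Real.pi) :
    t ^ 2 * Jhat d k α q ≤ Jhat d k α (t • q) := by
  unfold Jhat
  simp only [Prod.smul_snd, Prod.smul_fst, Pi.smul_apply, smul_eq_mul, mul_eq_zero, ht0.ne', false_or]
  split_ifs with hw
  · apply le_of_eq
    rw [mul_left_comm, Finset.mul_sum]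
    congr 1
    refine Finset.sum_congr rfl fun i _ => by ring
  · have he : (0:ℝ) < q.2.2 ^ (2 * d + 2) := by
      apply Even.pow_pos _ hw
      exact ⟨d + 1, by ring⟩
    have key : t ^ (2 * d + 4) * ∑ i, ((q.2.1 i).1 ^ 2 + (q.2.1 i).2 ^ 2) *
        (∏ j ∈ univ.erase i, Real.sin (α j * q.2.2 / 2) ^ 2) *
        Real.sin (α i * q.2.2 / 2) *
        (Real.sin (α i * q.2.2 / 2) - α i * q.2.2 / 2 * Real.cos (α i * q.2.2 / 2)) ≤
        ∑ i, ((t * (q.2.1 i).1) ^ 2 + (t * (q.2.1 i).2) ^ 2) *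
        (∏ j ∈ univ.erase i, Real.sin (α j * (t * q.2.2) / 2) ^ 2) *
        Real.sin (α i * (t * q.2.2) / 2) *
        (Real.sin (α i * (t * q.2.2) / 2) - α i * (t * q.2.2) / 2 * Real.cos (α i * (t * q.2.2) / 2)) := by
      rw [Finset.mul_sum]
      refine Finset.sum_le_sum fun i _ => ?_
      have hx : ∀ j, α j * (t * q.2.2) / 2 = t * (α j * q.2.2 / 2) := fun j => by ring
      simp only [hx]
      have hP : (t ^ 2) ^ (d - 1) * (∏ j ∈ univ.erase i, Real.sin (α j * q.2.2 / 2) ^ 2) ≤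
          ∏ j ∈ univ.erase i, Real.sin (t * (α j * q.2.2 / 2)) ^ 2 := by
        have hc : (t ^ 2) ^ (d - 1) = ∏ j ∈ univ.erase i, t ^ 2 := by
          simp [Finset.card_erase_of_mem]
        rw [hc, ← Finset.prod_mul_distrib]
        exact Finset.prod_le_prod (fun j _ => by positivity) fun j _ => aux_S ht0.le ht1 (hq j)
      obtain ⟨hH0, hH⟩ := aux_H ht0.le ht1 (hq i)
      have hdd : t ^ (2 * d + 4) = t ^ 2 * (t ^ 2) ^ (d - 1) * t ^ 4 := by
        have : 0 < d := i.pos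
        rw [← pow_mul, ← pow_add, ← pow_add]
        congr 1
        omega
      have hP0 : 0 ≤ ∏ j ∈ univ.erase i, Real.sin (α j * q.2.2 / 2) ^ 2 :=
        Finset.prod_nonneg fun j _ => by positivity
      have hP1 : 0 ≤ ∏ j ∈ univ.erase i, Real.sin (t * (α j * q.2.2 / 2)) ^ 2 :=
        Finset.prod_nonneg fun j _ => by positivity
      have := mul_le_mul hP hH (by positivity) hP1
      have h2 := mul_le_mul_of_nonneg_left this
        (show 0 ≤ t ^ 2 * ((q.2.1 i).1 ^ 2 + (q.2.1 i).2 ^ 2) by positivity)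
      rw [hdd]
      calc _ = _ := ?_
        _ ≤ _ := h2
        _ = _ := ?_ <;> ring
    rw [mul_pow t q.2.2]
    have hc : 0 ≤ (2:ℝ) ^ (2 * d) / ((∏ i, α i) ^ 2 * (t ^ (2 * d + 2) * q.2.2 ^ (2 * d + 2))) := by
      positivity
    refine le_trans (le_of_eq ?_) (mul_le_mul_of_nonneg_left key hc)
    rw [← mul_assoc, ← mul_assoc]
    congr 1
    have : t ^ (2 * d + 4) = t ^ 2 * t ^ (2 * d + 2) := by ring
    rw [this]
    have : t ^ (2 * d + 2) ≠ 0 := by positivity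
    rw [mul_left_comm ((∏ i, α i) ^ 2), div_mul_eq_mul_div, div_eq_mul_inv, div_eq_mul_inv, mul_inv (t ^ (2 * d + 2))]
    field_simp

lemma aux_finrank (d k : ℕ) (hk : 2 * d ≤ k) : Module.finrank ℝ (E d k) = k + 1 := by
  simp [E, Module.finrank_pi_fintype]
  omega

/-- Step 1 of the proof of Theorem 1.1: for every measurable subset `A` of the
cotangent injectivity domain `D` and every `t ∈ [0,1]`,
`∫_{t·A} Ĵ ≥ t^{k+3} ∫_A Ĵ`; this is the inequality `μ(Ω_t) ≥ t^{k+3} μ(Ω)`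
proving that a corank-1 Carnot group of rank `k` satisfies `MCP(0, k+3)`. -/
theorem Jhat_integral_scaling (d k : ℕ) (hd : 1 ≤ d) (hk : 2 * d ≤ k)
    (α : Fin d → ℝ) (hα : ∀ i, 0 < α i) (hmono : Monotone α)
    (A : Set (E d k)) (hA : MeasurableSet A)
    (hAD : A ⊆ {q : E d k |
      |q.2.2| < 2 * Real.pi / α ⟨d - 1, Nat.sub_lt hd one_pos⟩ ∧
      ∃ i, q.2.1 i ≠ 0})
    (t : ℝ) (ht : t ∈ Set.Icc (0 : ℝ) 1) :
    ∫⁻ q in t • A, ENNReal.ofReal (Jhat d k α q) ≥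
      ENNReal.ofReal (t ^ (k + 3)) * ∫⁻ q in A, ENNReal.ofReal (Jhat d k α q) := by
  obtain ⟨ht0, ht1⟩ := ht
  rcases ht0.eq_or_lt with rfl | ht0
  · simp
  have i1 : (volume : Measure (ℝ × ℝ)).IsAddHaarMeasure :=
    inferInstanceAs ((volume : Measure ℝ).prod volume).IsAddHaarMeasure
  have i2 : (volume : Measure (Fin d → ℝ × ℝ)).IsAddHaarMeasure :=
    inferInstanceAs (Measure.pi fun _ : Fin d => (volume : Measure (ℝ × ℝ))).IsAddHaarMeasure
  have s2 : SigmaFinite (volume : Measure (Fin d → ℝ × ℝ)) :=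
    inferInstanceAs (SigmaFinite (Measure.pi fun _ : Fin d => (volume : Measure (ℝ × ℝ))))
  have s3 : SigmaFinite (volume : Measure ((Fin d → ℝ × ℝ) × ℝ)) :=
    inferInstanceAs (SigmaFinite ((volume : Measure (Fin d → ℝ × ℝ)).prod (volume : Measure ℝ)))
  have i3 : (volume : Measure ((Fin d → ℝ × ℝ) × ℝ)).IsAddHaarMeasure :=
    Measure.prod.instIsAddHaarMeasure (volume : Measure (Fin d → ℝ × ℝ)) (volume : Measure ℝ)
  have i4 : (volume : Measure (E d k)).IsAddHaarMeasure :=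
    Measure.prod.instIsAddHaarMeasure (volume : Measure (Fin (k - 2 * d) → ℝ))
      (volume : Measure ((Fin d → ℝ × ℝ) × ℝ))
  have hmap := Measure.map_addHaar_smul (volume : Measure (E d k)) ht0.ne'
  have hemb : MeasurableEmbedding (fun q : E d k => t • q) :=
    (Homeomorph.smulOfNeZero t ht0.ne').measurableEmbedding
  have h1 : ∫⁻ q in t • A, ENNReal.ofReal (Jhat d k α q) =
      ENNReal.ofReal (t ^ (k + 1)) * ∫⁻ q in A, ENNReal.ofReal (Jhat d k α (t • q)) := by
    have h2 : ∫⁻ q in t • A, ENNReal.ofReal (Jhat d k α q) ∂(Measure.map (t • ·) (volume : Measure (E d k)))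
        = ∫⁻ q in A, ENNReal.ofReal (Jhat d k α (t • q)) := by
      rw [hemb.restrict_map, hemb.lintegral_map]
      rw [← Set.image_smul, Set.preimage_image_eq _ hemb.injective]
    rw [← h2, hmap, Measure.restrict_smul, lintegral_smul_measure, smul_eq_mul, ← mul_assoc,
      aux_finrank d k hk, ← ENNReal.ofReal_mul (by positivity), abs_of_pos (by positivity),
      mul_inv_cancel₀ (by positivity)]
    simp
  rw [h1, ge_iff_le, show t ^ (k + 3) = t ^ (k + 1) * t ^ 2 by ring,
    ENNReal.ofReal_mul (by positivity), mul_assoc]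
  gcongr
  rw [← lintegral_const_mul' _ _ ENNReal.ofReal_ne_top]
  refine setLIntegral_mono' hA fun q hq => ?_
  rw [← ENNReal.ofReal_mul (by positivity)]
  apply ENNReal.ofReal_le_ofReal
  apply aux_J d k α q ht0 ht1
  intro i
  have h3 := (hAD hq).1
  have hl := hα ⟨d - 1, Nat.sub_lt hd one_pos⟩
  have h4 : α i ≤ α ⟨d - 1, Nat.sub_lt hd one_pos⟩ := hmono (by
    rw [Fin.le_def]; have := i.2; simp only; omega)
  rw [lt_div_iff₀ hl] at h3
  rw [abs_div, abs_mul, abs_of_pos (hα i), abs_two]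
  have := mul_le_mul_of_nonneg_left h4 (abs_nonneg q.2.2)
  linarith
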